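/- Let θ ∈ (0,π/2). There exists a constant D > 0, depending only on n and θ, such that for every θ-capillary convex body K with capillary entropy point z_e and for every z in the relative interior of K_f, one has ℰ_θ(K, z) ≤ ℰ_θ(K) − D·e^{−2ℰ_θ(K)}·|z − z_e|². -/

import Mathlib

open MeasureTheory Real Set Filter
open scoped RealInnerProductSpace

noncomputable section

/-- Ambient Euclidean space `ℝ^{n+1}`. -/
abbrev Amb (n : ℕ) : Type := EuclideanSpace ℝ (Fin (n + 1))

/-- The `(n+1)`-st standard basis vector `E_{n+1}`. -/
def lastBasis (n : ℕ) : Amb n := EuclideanSpace.single (Fin.last n) 1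

/-- The vector `e := -E_{n+1}`. -/
def eVec (n : ℕ) : Amb n := -(lastBasis n)

/-- The closed upper half-space `\overline{ℝ^{n+1}_+}`. -/
def upperHalf (n : ℕ) : Set (Amb n) := {x | 0 ≤ x (Fin.last n)}

/-- The boundary hyperplane `∂ℝ^{n+1}_+`. -/
def hyperplane (n : ℕ) : Set (Amb n) := {x | x (Fin.last n) = 0}

/-- `ℓ(x) := sin²θ + cos θ · ⟨x, e⟩`. -/
def ell (n : ℕ) (θ : ℝ) (x : Amb n) : ℝ := sin θ ^ 2 + cos θ * ⟪x, eVec n⟫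

/-- The unit spherical cap `C_θ`. -/
def capSphere (n : ℕ) (θ : ℝ) : Set (Amb n) :=
  {ξ | ξ ∈ upperHalf n ∧ ‖ξ - cos θ • eVec n‖ = 1}

/-- The unit spherical cap body `Ĉ_θ`. -/
def capBodyUnit (n : ℕ) (θ : ℝ) : Set (Amb n) :=
  {x | x ∈ upperHalf n ∧ ‖x - cos θ • eVec n‖ ≤ 1}

/-- A capillary convex body: a compact convex subset of the closed upper half-space with
nonempty interior, whose flat part `K_f` has nonempty interior relative to the boundary
hyperplane and whose curved boundary `K_u` is nonempty. -/
structure IsCapillaryBody (n : ℕ) (K : Set (Amb n)) : Prop where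
  compact : IsCompact K
  convex : Convex ℝ K
  subset_upper : K ⊆ upperHalf n
  interior_nonempty : (interior K).Nonempty
  flat_relint_nonempty : (intrinsicInterior ℝ (K ∩ hyperplane n)).Nonempty
  curved_nonempty : (frontier K ∩ {x | 0 < x (Fin.last n)}).Nonempty

/-- Normal cone (of unit normal vectors) of `K` at `x`. -/
def normalCone (n : ℕ) (K : Set (Amb n)) (x : Amb n) : Set (Amb n) :=
  {ζ | ‖ζ‖ = 1 ∧ ∀ y ∈ K, ⟪ζ, y - x⟫ ≤ 0}

/-- A `θ`-capillary convex body: a capillary convex body with contact angle at most `θ`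
along the relative boundary of its flat part. -/
def IsThetaCapillary (n : ℕ) (θ : ℝ) (K : Set (Amb n)) : Prop :=
  IsCapillaryBody n K ∧
    ∀ x ∈ intrinsicFrontier ℝ (K ∩ hyperplane n),
      cos θ ≤ sSup ((fun ζ => ⟪ζ, lastBasis n⟫) '' normalCone n K x)

/-- Support function `h_z(ξ) := max_{y ∈ K} ⟨ξ - cos θ · e, y - z⟩`. -/
def suppFn (n : ℕ) (θ : ℝ) (K : Set (Amb n)) (z ξ : Amb n) : ℝ :=
  sSup ((fun y => ⟪ξ - cos θ • eVec n, y - z⟫) '' K)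

/-- Capillary support function `u_z := h_z / ℓ`. -/
def capSupp (n : ℕ) (θ : ℝ) (K : Set (Amb n)) (z ξ : Amb n) : ℝ :=
  suppFn n θ K z ξ / ell n θ ξ

/-- Capillary polar body `K*_z`. -/
def capPolar (n : ℕ) (θ : ℝ) (K : Set (Amb n)) (z : Amb n) : Set (Amb n) :=
  {x | ∃ r : ℝ, 0 ≤ r ∧ ∃ ξ ∈ capSphere n θ, x = z + r • ξ ∧ r * capSupp n θ K z ξ ≤ 1}

/-- Capillary area `ω_θ := ∫_{C_θ} ℓ dσ` of `C_θ` (surface measure = `n`-dimensional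
Hausdorff measure). -/
def omegaTheta (n : ℕ) (θ : ℝ) : ℝ := ∫ ξ in capSphere n θ, ell n θ ξ ∂μH[(n : ℝ)]

/-- `ℰ_θ(K, z) := (1/ω_θ) ∫_{C_θ} log(u_z) ℓ dσ`. -/
def entropyAt (n : ℕ) (θ : ℝ) (K : Set (Amb n)) (z : Amb n) : ℝ :=
  (1 / omegaTheta n θ) *
    ∫ ξ in capSphere n θ, Real.log (capSupp n θ K z ξ) * ell n θ ξ ∂μH[(n : ℝ)]

/-- Capillary entropy `ℰ_θ(K)`: supremum of `ℰ_θ(K, z)` over `z` in the relative interior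
of the flat part `K_f`. -/
def capEntropy (n : ℕ) (θ : ℝ) (K : Set (Amb n)) : ℝ :=
  sSup (entropyAt n θ K '' intrinsicInterior ℝ (K ∩ hyperplane n))

/-- The spherical cap body `Ĉ_{r,θ}(x₀)`. -/
def capBodyAt (n : ℕ) (θ r : ℝ) (x₀ : Amb n) : Set (Amb n) :=
  {x | x ∈ upperHalf n ∧ ‖x - (x₀ + (r * cos θ) • eVec n)‖ ≤ r}

/-- Capillary inner radius `ρ₋(K, θ)`. -/
def capInRadius (n : ℕ) (θ : ℝ) (K : Set (Amb n)) : ℝ :=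
  sSup {r : ℝ | 0 < r ∧ ∃ x₀ ∈ hyperplane n, capBodyAt n θ r x₀ ⊆ K}

/-- Capillary outer radius `ρ₊(K, θ)`. -/
def capOutRadius (n : ℕ) (θ : ℝ) (K : Set (Amb n)) : ℝ :=
  sInf {r : ℝ | 0 < r ∧ ∃ x₀ ∈ hyperplane n, K ⊆ capBodyAt n θ r x₀}

/-- Classical inner radius `ρ₋(K)`. -/
def inRadius (n : ℕ) (K : Set (Amb n)) : ℝ :=
  sSup {ρ : ℝ | 0 < ρ ∧ ∃ x₀ ∈ hyperplane n, Metric.ball x₀ ρ ∩ upperHalf n ⊆ K}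

/-- Classical outer radius `ρ₊(K)`. -/
def outRadius (n : ℕ) (K : Set (Amb n)) : ℝ :=
  sInf {ρ : ℝ | 0 < ρ ∧ ∃ x₀ ∈ hyperplane n, K ⊆ Metric.ball x₀ ρ}

/-- Dual capillary gauge function `F_θ^∘`. -/
def Fdual (n : ℕ) (θ : ℝ) (x : Amb n) : ℝ :=
  (1 / sin θ) *
    (Real.sqrt (‖x‖ ^ 2 + (cos θ / sin θ) ^ 2 * ⟪eVec n, x⟫ ^ 2) -
      (cos θ / sin θ) * ⟪eVec n, x⟫)

/-- Capillary gauge function `F_θ(η) := |η| + cos θ · ⟨e, η⟩`. -/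
def Fgauge (n : ℕ) (θ : ℝ) (η : Amb n) : ℝ := ‖η‖ + cos θ * ⟪eVec n, η⟫

/-- Capillary Cahn–Hoffman map `Ψ(ξ) := (ξ - cos θ · e)/ℓ(ξ)`. -/
def cahnHoffman (n : ℕ) (θ : ℝ) (ξ : Amb n) : Amb n :=
  (ell n θ ξ)⁻¹ • (ξ - cos θ • eVec n)

/-- The ellipsoid portion `D_θ`. -/
def Dtheta (n : ℕ) (θ : ℝ) : Set (Amb n) :=
  {η | Fgauge n θ η = 1 ∧ cos θ / sin θ ^ 2 ≤ ⟪η, lastBasis n⟫}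

/-- Reflection across the boundary hyperplane `∂ℝ^{n+1}_+`. -/
def reflect (n : ℕ) (x : Amb n) : Amb n :=
  x - (2 * ⟪x, lastBasis n⟫) • lastBasis n

def phi (t : ℝ) : ENNReal := if t = 0 then ⊤ else ENNReal.ofReal (-Real.log t)

lemma phi_meas : Measurable phi := by
  unfold phi
  refine Measurable.ite (measurableSet_singleton 0) measurable_const ?_
  fun_prop

lemma phi_lintegral : ∫⁻ t, phi t < ⊤ := by
  have h1 : ∫⁻ t, phi t ≤ ∫⁻ t, (Icc (-1:ℝ) 1).indicator (fun t => ‖Real.log t‖ₑ) t := by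
    apply lintegral_mono_ae
    have : ∀ᵐ t : ℝ, t ≠ 0 := by
      rw [ae_iff]; simp
    filter_upwards [this] with t ht
    unfold phi
    rw [if_neg ht]
    by_cases h : t ∈ Icc (-1:ℝ) 1
    · rw [indicator_of_mem h, ← ofReal_norm]
      apply ENNReal.ofReal_le_ofReal
      rw [Real.norm_eq_abs]; exact neg_le_abs _
    · rw [indicator_of_notMem h]
      simp only [nonpos_iff_eq_zero, ENNReal.ofReal_eq_zero, neg_nonpos]
      rw [← Real.log_abs]
      apply Real.log_nonneg
      by_contra hc
      push Not at hc
      exact h (abs_le.1 hc.le)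
  refine h1.trans_lt ?_
  rw [lintegral_indicator measurableSet_Icc]
  have := intervalIntegral.intervalIntegrable_log' (a := -1) (b := 1)
  rw [intervalIntegrable_iff_integrableOn_Icc_of_le (by norm_num)] at this
  exact this.2

lemma phi_mul (s t : ℝ) : phi (s * t) ≤ phi s + phi t := by
  unfold phi
  by_cases hs : s = 0
  · simp [hs]
  by_cases ht : t = 0
  · simp [ht]
  rw [if_neg hs, if_neg ht, if_neg (mul_ne_zero hs ht), Real.log_mul hs ht, neg_add]
  exact ENNReal.ofReal_add_le

lemma phi_anti {s t : ℝ} (hs : 0 < s) (h : s ≤ |t|) : phi t ≤ phi s := by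
  unfold phi
  have ht : t ≠ 0 := by
    rintro rfl; simp at h; linarith
  rw [if_neg hs.ne', if_neg ht]
  apply ENNReal.ofReal_le_ofReal
  rw [← Real.log_abs t]
  have := Real.log_le_log hs h
  linarith

lemma phi_line (a b : ℝ) (ha : a ≠ 0) :
    ∫⁻ t in Icc (-1:ℝ) 1, phi (a * t + b) ≤ 2 * phi a + ∫⁻ t, phi t := by
  calc _ ≤ ∫⁻ t in Icc (-1:ℝ) 1, (phi a + phi (t + b / a)) := by
        apply lintegral_mono
        intro t
        have : a * t + b = a * (t + b / a) := by field_simp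
        show phi (a * t + b) ≤ phi a + phi (t + b / a)
        rw [this]
        exact phi_mul _ _
    _ = 2 * phi a + ∫⁻ t in Icc (-1:ℝ) 1, phi (t + b / a) := by
        rw [lintegral_add_left measurable_const]
        simp only [lintegral_const, Measure.restrict_apply MeasurableSet.univ, univ_inter,
          Real.volume_Icc]
        norm_num [mul_comm]
    _ ≤ 2 * phi a + ∫⁻ t, phi (t + b / a) := by
        gcongr; exact Measure.restrict_le_self
    _ = _ := by rw [lintegral_add_right_eq_self phi]

lemma phi_box (m : ℕ) : ∃ C : ENNReal, C < ⊤ ∧ ∀ (a : Fin (m+1) → ℝ) (i : Fin (m+1)),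
    1 / ((m:ℝ)+1) ≤ |a i| →
    ∫⁻ x in Set.pi univ (fun _ : Fin (m+1) => Icc (-1:ℝ) 1), phi (∑ j, a j * x j) ≤ C := by
  set B' : Set (Fin m → ℝ) := Set.pi univ (fun _ => Icc (-1:ℝ) 1) with hB'
  have hB'm : MeasurableSet B' := MeasurableSet.univ_pi fun _ => measurableSet_Icc
  refine ⟨(2 * phi (1 / ((m:ℝ)+1)) + ∫⁻ t, phi t) * volume B', ?_, ?_⟩
  · have h1 : phi (1 / ((m:ℝ)+1)) < ⊤ := by
      unfold phi
      rw [if_neg (by positivity)]; exact ENNReal.ofReal_lt_top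
    have h2 : volume B' < ⊤ := by
      rw [hB', volume_pi_pi]; simp
    exact ENNReal.mul_lt_top (ENNReal.add_lt_top.2 ⟨ENNReal.mul_lt_top (by simp) h1, phi_lintegral⟩) h2
  intro a i ha
  have hpos : (0:ℝ) < 1 / ((m:ℝ)+1) := by positivity
  have hai : a i ≠ 0 := by
    intro h; rw [h] at ha; simp at ha; linarith [show (0:ℝ) < ((m:ℝ)+1)⁻¹ by positivity]
  set B : Set (Fin (m+1) → ℝ) := Set.pi univ (fun _ => Icc (-1:ℝ) 1) with hB
  have hBm : MeasurableSet B := MeasurableSet.univ_pi fun _ => measurableSet_Icc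
  have hF : Measurable (fun x : Fin (m+1) → ℝ => phi (∑ j, a j * x j)) := by
    refine phi_meas.comp ?_
    fun_prop
  rw [← lintegral_indicator hBm]
  have hmp := (volume_preserving_piFinSuccAbove (fun _ : Fin (m + 1) => ℝ) i).symm
  rw [← hmp.lintegral_comp (hF.indicator hBm)]
  rw [Measure.volume_eq_prod, lintegral_prod_symm _ (by
    have := (hF.indicator hBm).comp (MeasurableEquiv.piFinSuccAbove (fun _ : Fin (m + 1) => ℝ) i).symm.measurable
    exact this.aemeasurable)]
  calc _ ≤ ∫⁻ y, B'.indicator (fun _ => 2 * phi (1 / ((m:ℝ)+1)) + ∫⁻ t, phi t) y := by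
        apply lintegral_mono
        intro y
        by_cases hy : y ∈ B'
        · rw [indicator_of_mem hy]
          refine le_trans ?_ ((phi_line (a i) (∑ j, a (i.succAbove j) * y j) hai).trans ?_)
          · rw [← lintegral_indicator measurableSet_Icc]
            apply lintegral_mono
            intro t
            simp only [MeasurableEquiv.piFinSuccAbove_symm_apply]
            by_cases ht : t ∈ Icc (-1:ℝ) 1
            · rw [indicator_of_mem ht]
              refine (indicator_le_self _ _ _).trans ?_
              simp [Fin.sum_univ_succAbove _ i, Fin.insertNthEquiv]
            · rw [indicator_of_notMem, indicator_of_notMem ht]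
              intro h
              apply ht
              simpa [Fin.insertNthEquiv] using h i (mem_univ _)
          · gcongr
            exact phi_anti hpos ha
        · rw [indicator_of_notMem hy]
          simp only [nonpos_iff_eq_zero]
          rw [show (0:ENNReal) = ∫⁻ t : ℝ, 0 by simp]
          apply lintegral_congr
          intro t
          rw [indicator_of_notMem]
          intro h
          apply hy
          intro j _
          simpa [Fin.insertNthEquiv] using h (i.succAbove j) (mem_univ _)
    _ = _ := by rw [lintegral_indicator hB'm]; simp

lemma mem_cap_iff (n : ℕ) (θ : ℝ) (ξ : Amb n) : ξ ∈ capSphere n θ ↔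
    0 ≤ ξ (Fin.last n) ∧
      ∑ j : Fin n, ξ (Fin.castSucc j) ^ 2 + (ξ (Fin.last n) + cos θ) ^ 2 = 1 := by
  unfold capSphere upperHalf
  simp only [mem_ofPred_eq]
  refine and_congr_right fun _ => ?_
  rw [← sq_eq_sq₀ (norm_nonneg _) zero_le_one, EuclideanSpace.real_norm_sq_eq, Fin.sum_univ_castSucc]
  simp [eVec, lastBasis]

lemma ell_eq (n : ℕ) (θ : ℝ) (ξ : Amb n) :
    ell n θ ξ = sin θ ^ 2 - cos θ * ξ (Fin.last n) := by
  simp [ell, eVec, lastBasis, EuclideanSpace.inner_single_right]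
  ring

lemma ell_cont (n : ℕ) (θ : ℝ) : Continuous (ell n θ) := by
  unfold ell; fun_prop

lemma ell_bounds (n : ℕ) (θ : ℝ) (hθ : θ ∈ Set.Ioo 0 (π / 2)) {ξ : Amb n}
    (h : ξ ∈ capSphere n θ) : 1 - cos θ ≤ ell n θ ξ ∧ ell n θ ξ ≤ 1 := by
  rw [mem_cap_iff] at h
  obtain ⟨h0, h1⟩ := h
  have hc : 0 < cos θ := cos_pos_of_mem_Ioo ⟨by linarith [hθ.1, pi_pos], hθ.2⟩
  have hs : 0 ≤ ∑ j : Fin n, ξ (Fin.castSucc j) ^ 2 := Finset.sum_nonneg fun _ _ => sq_nonneg _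
  have h2 : ξ (Fin.last n) + cos θ ≤ 1 := by nlinarith
  rw [ell_eq]
  have := sin_sq_add_cos_sq θ
  constructor <;> nlinarith [sq_nonneg (cos θ), mul_nonneg hc.le h0]

lemma one_sub_cos_pos (θ : ℝ) (hθ : θ ∈ Set.Ioo 0 (π / 2)) : 0 < 1 - cos θ := by
  have : cos θ < cos 0 := cos_lt_cos_of_nonneg_of_le_pi_div_two le_rfl hθ.2.le hθ.1
  simpa using this

lemma cap_closed (n : ℕ) (θ : ℝ) : IsClosed (capSphere n θ) := by
  unfold capSphere upperHalf
  refine IsClosed.inter ?_ ?_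
  · exact isClosed_le continuous_const (by fun_prop)
  · exact isClosed_eq (by fun_prop) continuous_const

def graphMap (n : ℕ) (θ : ℝ) (x : Fin n → ℝ) : Amb n :=
  WithLp.toLp 2 (Fin.snoc (α := fun _ => ℝ) x (Real.sqrt (1 - ∑ j, x j ^ 2) - cos θ))

lemma graphMap_last (n : ℕ) (θ : ℝ) (x : Fin n → ℝ) :
    graphMap n θ x (Fin.last n) = Real.sqrt (1 - ∑ j, x j ^ 2) - cos θ := by
  simp [graphMap]

lemma graphMap_cast (n : ℕ) (θ : ℝ) (x : Fin n → ℝ) (j : Fin n) :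
    graphMap n θ x (Fin.castSucc j) = x j := by
  simp [graphMap]

def baseDom (n : ℕ) (θ : ℝ) : Set (Fin n → ℝ) := {x | ∑ j, x j ^ 2 ≤ sin θ ^ 2}

lemma graphMap_cont (n : ℕ) (θ : ℝ) : Continuous (graphMap n θ) := by
  unfold graphMap
  refine (PiLp.continuous_toLp 2 _).comp ?_
  rw [continuous_pi_iff]
  intro i
  refine Fin.lastCases ?_ (fun j => ?_) i
  · simp only [Fin.snoc_last]; fun_prop
  · simp only [Fin.snoc_castSucc]; fun_prop

lemma graphMap_mem (n : ℕ) (θ : ℝ) (hθ : θ ∈ Set.Ioo 0 (π / 2)) {x : Fin n → ℝ}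
    (hx : x ∈ baseDom n θ) : graphMap n θ x ∈ capSphere n θ := by
  have hc : 0 < cos θ := cos_pos_of_mem_Ioo ⟨by linarith [hθ.1, pi_pos], hθ.2⟩
  have hx' : ∑ j, x j ^ 2 ≤ sin θ ^ 2 := hx
  have := sin_sq_add_cos_sq θ
  rw [mem_cap_iff]
  simp only [graphMap_last, graphMap_cast]
  constructor
  · have : cos θ ≤ Real.sqrt (1 - ∑ j, x j ^ 2) := Real.le_sqrt_of_sq_le (by linarith)
    linarith
  · rw [sub_add_cancel, Real.sq_sqrt (by nlinarith)]; ring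

lemma cap_eq_image (n : ℕ) (θ : ℝ) (hθ : θ ∈ Set.Ioo 0 (π / 2)) {ξ : Amb n}
    (h : ξ ∈ capSphere n θ) : ∃ x ∈ baseDom n θ, graphMap n θ x = ξ := by
  have hc : 0 < cos θ := cos_pos_of_mem_Ioo ⟨by linarith [hθ.1, pi_pos], hθ.2⟩
  rw [mem_cap_iff] at h
  obtain ⟨h0, h1⟩ := h
  have := sin_sq_add_cos_sq θ
  refine ⟨fun j => ξ (Fin.castSucc j), ?_, ?_⟩
  · show ∑ j : Fin n, ξ (Fin.castSucc j) ^ 2 ≤ sin θ ^ 2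
    nlinarith
  · ext i
    refine Fin.lastCases ?_ (fun j => ?_) i
    · rw [graphMap_last]
      have : 1 - ∑ j : Fin n, ξ (Fin.castSucc j) ^ 2 = (ξ (Fin.last n) + cos θ) ^ 2 := by linarith
      rw [this, Real.sqrt_sq (by linarith)]; ring
    · rw [graphMap_cast]

lemma base_sub_box (n : ℕ) (θ : ℝ) :
    baseDom n θ ⊆ Set.pi univ (fun _ : Fin n => Icc (-1:ℝ) 1) := by
  intro x hx i _
  have hx' : ∑ j, x j ^ 2 ≤ sin θ ^ 2 := hx
  have h1 : x i ^ 2 ≤ ∑ j, x j ^ 2 :=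
    Finset.single_le_sum (f := fun j => x j ^ 2) (fun _ _ => sq_nonneg _) (Finset.mem_univ i)
  have := sin_sq_le_one θ
  exact abs_le.1 (abs_le_one_iff_mul_self_le_one.2 (by nlinarith))

lemma graphMap_lip (n : ℕ) (θ : ℝ) (hθ : θ ∈ Set.Ioo 0 (π / 2)) :
    ∃ L : NNReal, LipschitzOnWith L (graphMap n θ) (baseDom n θ) := by
  have hc : 0 < cos θ := cos_pos_of_mem_Ioo ⟨by linarith [hθ.1, pi_pos], hθ.2⟩
  refine ⟨⟨Real.sqrt (n + (n / cos θ) ^ 2), Real.sqrt_nonneg _⟩, ?_⟩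
  apply LipschitzOnWith.of_dist_le_mul
  intro x hx y hy
  show dist _ _ ≤ Real.sqrt (n + (n / cos θ) ^ 2) * dist x y
  have hxi := base_sub_box n θ hx
  have hyi := base_sub_box n θ hy
  have hx' : ∑ j, x j ^ 2 ≤ sin θ ^ 2 := hx
  have hy' : ∑ j, y j ^ 2 ≤ sin θ ^ 2 := hy
  have hsc := sin_sq_add_cos_sq θ
  have hd : ∀ j, |x j - y j| ≤ dist x y := fun j => by
    rw [← Real.dist_eq]; exact dist_le_pi_dist x y j
  set d := dist x y with hdd
  have hd0 : 0 ≤ d := dist_nonneg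
  set a := Real.sqrt (1 - ∑ j, x j ^ 2) with ha
  set b := Real.sqrt (1 - ∑ j, y j ^ 2) with hb
  have hac : cos θ ≤ a := Real.le_sqrt_of_sq_le (by linarith)
  have hbc : cos θ ≤ b := Real.le_sqrt_of_sq_le (by linarith)
  have ha2 : a ^ 2 = 1 - ∑ j, x j ^ 2 := Real.sq_sqrt (by nlinarith)
  have hb2 : b ^ 2 = 1 - ∑ j, y j ^ 2 := Real.sq_sqrt (by nlinarith)
  have hdiff : |b ^ 2 - a ^ 2| ≤ 2 * n * d := by
    have : b ^ 2 - a ^ 2 = ∑ j, (x j ^ 2 - y j ^ 2) := by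
      rw [ha2, hb2, Finset.sum_sub_distrib]; ring
    rw [this]
    refine (Finset.abs_sum_le_sum_abs _ _).trans ?_
    refine (Finset.sum_le_card_nsmul _ _ (2 * d) ?_).trans ?_
    · intro j _
      have h1 := hxi j (mem_univ _)
      have h2 := hyi j (mem_univ _)
      have : x j ^ 2 - y j ^ 2 = (x j + y j) * (x j - y j) := by ring
      rw [this, abs_mul]
      have h3 : |x j + y j| ≤ 2 := abs_le.2 ⟨by linarith [h1.1, h2.1], by linarith [h1.2, h2.2]⟩
      exact mul_le_mul h3 (hd j) (abs_nonneg _) (by norm_num)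
    · simp; linarith
  have hab : (a - b) ^ 2 ≤ (n / cos θ) ^ 2 * d ^ 2 := by
    rw [← mul_pow]
    apply sq_le_sq'  
    all_goals
      have h1 : |a - b| * (2 * cos θ) ≤ 2 * n * d := by
        calc |a - b| * (2 * cos θ) ≤ |a - b| * |a + b| := by
              gcongr; rw [abs_of_pos (by linarith)]; linarith
          _ = |b ^ 2 - a ^ 2| := by rw [← abs_mul, ← abs_neg]; congr 1; ring
          _ ≤ _ := hdiff
      have h2 : |a - b| ≤ n / cos θ * d := by
        rw [div_mul_eq_mul_div, le_div_iff₀ hc]; linarith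
      have := abs_le.1 h2
      linarith [this.1, this.2]
  rw [EuclideanSpace.dist_eq, ← Real.sqrt_sq hd0, ← Real.sqrt_mul (by positivity)]
  apply Real.sqrt_le_sqrt
  rw [Fin.sum_univ_castSucc]
  simp only [graphMap_last, graphMap_cast, Real.dist_eq, sq_abs]
  have h3 : ∑ j, (x j - y j) ^ 2 ≤ n * d ^ 2 := by
    refine (Finset.sum_le_card_nsmul _ _ (d ^ 2) ?_).trans ?_
    · intro j _
      rw [← sq_abs]
      exact pow_le_pow_left₀ (abs_nonneg _) (hd j) 2
    · simp
  have h4 : a - cos θ - (b - cos θ) = a - b := by ring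
  rw [← ha, ← hb, h4]
  linarith

lemma base_closed (n : ℕ) (θ : ℝ) : IsClosed (baseDom n θ) :=
  isClosed_le (by fun_prop) continuous_const

lemma cap_dom (n : ℕ) (θ : ℝ) (hθ : θ ∈ Set.Ioo 0 (π / 2)) :
    ∃ L : ENNReal, L < ⊤ ∧ ∀ f : Amb n → ENNReal, Measurable f →
      ∫⁻ ξ in capSphere n θ, f ξ ∂μH[(n:ℝ)] ≤ L * ∫⁻ x in baseDom n θ, f (graphMap n θ x) := by
  obtain ⟨L, hL⟩ := graphMap_lip n θ hθ
  refine ⟨(L : ENNReal) ^ (n:ℝ), ENNReal.rpow_lt_top_of_nonneg (by positivity) (by simp), ?_⟩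
  intro f hf
  have hle : (μH[(n:ℝ)] : Measure (Amb n)).restrict (capSphere n θ) ≤
      ((L : ENNReal) ^ (n:ℝ)) • (volume.restrict (baseDom n θ)).map (graphMap n θ) := by
    rw [Measure.le_iff]
    intro s hs
    rw [Measure.restrict_apply hs, Measure.smul_apply,
      Measure.map_apply (graphMap_cont n θ).measurable hs,
      Measure.restrict_apply ((graphMap_cont n θ).measurable hs), smul_eq_mul]
    have h1 : s ∩ capSphere n θ ⊆ graphMap n θ '' (graphMap n θ ⁻¹' s ∩ baseDom n θ) := by
      rintro ξ ⟨h1, h2⟩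
      obtain ⟨x, hx, rfl⟩ := cap_eq_image n θ hθ h2
      exact ⟨x, ⟨h1, hx⟩, rfl⟩
    refine (measure_mono h1).trans ?_
    have h2 := (hL.mono inter_subset_right : LipschitzOnWith L (graphMap n θ)
      (graphMap n θ ⁻¹' s ∩ baseDom n θ)).hausdorffMeasure_image_le (d := (n:ℝ)) (by positivity)
    have h3 : (μH[(n:ℝ)] : Measure (Fin n → ℝ)) = volume := by
      have := hausdorffMeasure_pi_real (ι := Fin n)
      simpa using this
    rwa [h3] at h2
  refine (lintegral_mono' hle le_rfl).trans ?_
  rw [lintegral_smul_measure, lintegral_map hf (graphMap_cont n θ).measurable, smul_eq_mul]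

lemma cap_finite (n : ℕ) (θ : ℝ) (hθ : θ ∈ Set.Ioo 0 (π / 2)) :
    (μH[(n:ℝ)] : Measure (Amb n)) (capSphere n θ) < ⊤ := by
  obtain ⟨L, hL, h⟩ := cap_dom n θ hθ
  have := h (fun _ => 1) measurable_const
  simp only [lintegral_const, one_mul, Measure.restrict_apply MeasurableSet.univ, univ_inter] at this
  refine this.trans_lt (ENNReal.mul_lt_top hL ?_)
  refine (measure_mono (base_sub_box n θ)).trans_lt ?_
  rw [volume_pi_pi]; simp

lemma cap_pos (n : ℕ) (θ : ℝ) (hθ : θ ∈ Set.Ioo 0 (π / 2)) :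
    0 < (μH[(n:ℝ)] : Measure (Amb n)) (capSphere n θ) := by
  have hs : 0 < sin θ := sin_pos_of_pos_of_lt_pi hθ.1 (by linarith [hθ.2, pi_pos])
  have hlip : LipschitzWith 1 (fun ξ : Amb n => fun j : Fin n => ξ (Fin.castSucc j)) := by
    apply LipschitzWith.of_dist_le_mul
    intro x y
    rw [NNReal.coe_one, one_mul, dist_pi_le_iff dist_nonneg]
    intro j
    rw [dist_eq_norm, dist_eq_norm]
    exact PiLp.norm_apply_le (x - y) (Fin.castSucc j)
  have h2 := hlip.hausdorffMeasure_image_le (d := (n:ℝ)) (by positivity) (capSphere n θ)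
  have h3 : (μH[(n:ℝ)] : Measure (Fin n → ℝ)) = volume := by
    have := hausdorffMeasure_pi_real (ι := Fin n)
    simpa using this
  rw [h3] at h2
  simp only [ENNReal.coe_one, ENNReal.one_rpow, one_mul] at h2
  refine lt_of_lt_of_le ?_ h2
  have h4 : baseDom n θ ⊆ (fun ξ : Amb n => fun j : Fin n => ξ (Fin.castSucc j)) '' capSphere n θ := by
    intro x hx
    exact ⟨graphMap n θ x, graphMap_mem n θ hθ hx, by funext j; exact graphMap_cast n θ x j⟩
  refine lt_of_lt_of_le ?_ (measure_mono h4)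
  apply Measure.measure_pos_of_mem_nhds volume (x := 0)
  have ho : IsOpen {x : Fin n → ℝ | ∑ j, x j ^ 2 < sin θ ^ 2} :=
    isOpen_lt (by fun_prop) continuous_const
  refine mem_of_superset (ho.mem_nhds ?_) ?_
  · simp; positivity
  · intro x hx
    have hx' : ∑ j, x j ^ 2 < sin θ ^ 2 := hx
    exact hx'.le

lemma inner_hyper (n : ℕ) (a ξ : Amb n) (ha : a (Fin.last n) = 0) :
    ⟪ξ, a⟫ = ∑ j : Fin n, a (Fin.castSucc j) * ξ (Fin.castSucc j) := by
  rw [PiLp.inner_apply, Fin.sum_univ_castSucc]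
  simp [ha]

/-- Uniform log-integrability of horizontal linear functions on the cap. -/
lemma phi_cap (n : ℕ) (hn : 1 ≤ n) (θ : ℝ) (hθ : θ ∈ Set.Ioo 0 (π / 2)) :
    ∃ C : ENNReal, C < ⊤ ∧ ∀ a : Amb n, a (Fin.last n) = 0 → ‖a‖ = 1 →
      ∫⁻ ξ in capSphere n θ, phi ⟪ξ, a⟫ ∂μH[(n:ℝ)] ≤ C := by
  obtain ⟨L, hL, h⟩ := cap_dom n θ hθ
  obtain ⟨m, rfl⟩ : ∃ m, n = m + 1 := ⟨n - 1, by omega⟩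
  obtain ⟨C, hC, hb⟩ := phi_box m
  refine ⟨L * C, ENNReal.mul_lt_top hL hC, ?_⟩
  intro a ha hna
  have hi : ∃ i : Fin (m+1), 1 / ((m:ℝ)+1) ≤ |a (Fin.castSucc i)| := by
    by_contra hcon
    push Not at hcon
    have h1 : ‖a‖ ^ 2 = ∑ j : Fin (m+1), a (Fin.castSucc j) ^ 2 := by
      rw [EuclideanSpace.real_norm_sq_eq, Fin.sum_univ_castSucc, ha]; simp
    have h2 : ∑ j : Fin (m+1), a (Fin.castSucc j) ^ 2 < ∑ j : Fin (m+1), (1 / ((m:ℝ)+1)) := by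
      apply Finset.sum_lt_sum_of_nonempty Finset.univ_nonempty
      intro j _
      rw [← sq_abs]
      have h3 := hcon j
      have h4 : 1 / ((m:ℝ)+1) ≤ 1 := by
        rw [div_le_one (by positivity)]; linarith [(Nat.cast_nonneg m : (0:ℝ) ≤ m)]
      nlinarith [abs_nonneg (a (Fin.castSucc j))]
    rw [← h1, hna] at h2
    simp at h2
    field_simp at h2
    simp at h2
  obtain ⟨i, hi⟩ := hi
  refine (h (fun ξ => phi ⟪ξ, a⟫) (phi_meas.comp (by fun_prop))).trans ?_
  gcongr
  refine le_trans ?_ (hb (fun j => a (Fin.castSucc j)) i hi)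
  refine (lintegral_mono_set (base_sub_box (m+1) θ)).trans ?_
  apply le_of_eq
  congr 1
  funext x
  rw [inner_hyper _ _ _ ha]
  simp only [graphMap_cast]

lemma nu_norm (n : ℕ) (θ : ℝ) {ξ : Amb n} (h : ξ ∈ capSphere n θ) :
    ‖ξ - cos θ • eVec n‖ = 1 := h.2

lemma nu_inner (n : ℕ) (θ : ℝ) (ξ a : Amb n) (ha : a (Fin.last n) = 0) :
    ⟪ξ - cos θ • eVec n, a⟫ = ⟪ξ, a⟫ := by
  rw [inner_sub_left, inner_smul_left]
  simp [eVec, lastBasis, EuclideanSpace.inner_single_left, ha]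

lemma log_cap (n : ℕ) (hn : 1 ≤ n) (θ : ℝ) (hθ : θ ∈ Set.Ioo 0 (π / 2)) :
    ∃ C : ℝ, ∀ a : Amb n, a (Fin.last n) = 0 → ‖a‖ = 1 →
      (∀ᵐ ξ ∂(μH[(n:ℝ)] : Measure (Amb n)).restrict (capSphere n θ), ⟪ξ, a⟫ ≠ 0) ∧
      IntegrableOn (fun ξ => Real.log ⟪ξ, a⟫) (capSphere n θ) (μH[(n:ℝ)]) ∧
      IntegrableOn (fun ξ => Real.log ⟪ξ, a⟫ * ell n θ ξ) (capSphere n θ) (μH[(n:ℝ)]) ∧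
      -C ≤ ∫ ξ in capSphere n θ, Real.log ⟪ξ, a⟫ * ell n θ ξ ∂μH[(n:ℝ)] := by
  obtain ⟨C, hC, h⟩ := phi_cap n hn θ hθ
  refine ⟨C.toReal, fun a ha hna => ?_⟩
  have hcm := (cap_closed n θ).measurableSet
  have h1 := h a ha hna
  have hm : Measurable (fun ξ : Amb n => phi ⟪ξ, a⟫) := phi_meas.comp (by fun_prop)
  have hne : ∀ᵐ ξ ∂(μH[(n:ℝ)] : Measure (Amb n)).restrict (capSphere n θ), ⟪ξ, a⟫ ≠ 0 := by
    have := ae_lt_top hm (h1.trans_lt hC).ne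
    filter_upwards [this] with ξ hξ h0
    rw [h0] at hξ
    simp [phi] at hξ
  have hle : ∀ ξ ∈ capSphere n θ, Real.log ⟪ξ, a⟫ ≤ 0 := by
    intro ξ hξ
    rw [← Real.log_abs]
    apply Real.log_nonpos (abs_nonneg _)
    rw [← nu_inner n θ ξ a ha]
    have := abs_real_inner_le_norm (ξ - cos θ • eVec n) a
    rwa [hna, nu_norm n θ hξ, one_mul] at this
  have hen : ∫⁻ ξ in capSphere n θ, ‖Real.log ⟪ξ, a⟫‖ₑ ∂μH[(n:ℝ)] ≤ C := by
    refine le_trans (lintegral_mono_ae ?_) h1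
    filter_upwards [hne, ae_restrict_mem hcm] with ξ h0 hξ
    rw [phi, if_neg h0, ← ofReal_norm, Real.norm_eq_abs, abs_of_nonpos (hle ξ hξ)]
  have hlm : Measurable (fun ξ : Amb n => Real.log ⟪ξ, a⟫) := by fun_prop
  have hlogint : IntegrableOn (fun ξ => Real.log ⟪ξ, a⟫) (capSphere n θ) (μH[(n:ℝ)]) :=
    ⟨hlm.aestronglyMeasurable, hen.trans_lt hC⟩
  have hlogint2 : IntegrableOn (fun ξ => Real.log ⟪ξ, a⟫ * ell n θ ξ) (capSphere n θ) (μH[(n:ℝ)]) := by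
    refine Integrable.mono hlogint (hlm.mul (ell_cont n θ).measurable).aestronglyMeasurable ?_
    filter_upwards [ae_restrict_mem hcm] with ξ hξ
    rw [norm_mul]
    have hb := ell_bounds n θ hθ hξ
    have hp := one_sub_cos_pos θ hθ
    have : ‖ell n θ ξ‖ ≤ 1 := by rw [Real.norm_eq_abs, abs_le]; constructor <;> linarith
    exact mul_le_of_le_one_right (norm_nonneg _) this
  refine ⟨hne, hlogint, hlogint2, ?_⟩
  have h3 : ∫ ξ in capSphere n θ, Real.log ⟪ξ, a⟫ ∂μH[(n:ℝ)] ≤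
      ∫ ξ in capSphere n θ, Real.log ⟪ξ, a⟫ * ell n θ ξ ∂μH[(n:ℝ)] := by
    apply setIntegral_mono_on hlogint hlogint2 hcm
    intro ξ hξ
    have hb := ell_bounds n θ hθ hξ
    nlinarith [hle ξ hξ]
  refine le_trans ?_ h3
  have h4 := norm_integral_le_lintegral_norm (μ := (μH[(n:ℝ)]).restrict (capSphere n θ))
    (fun ξ : Amb n => Real.log ⟪ξ, a⟫)
  have h5 : (∫⁻ ξ in capSphere n θ, ENNReal.ofReal ‖Real.log ⟪ξ, a⟫‖ ∂μH[(n:ℝ)]).toReal ≤ C.toReal := by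
    apply ENNReal.toReal_mono hC.ne
    simpa only [ofReal_norm] using hen
  have h6 := (abs_le.1 (h4.trans h5)).1
  linarith

lemma supp_bdd (n : ℕ) (θ : ℝ) (K : Set (Amb n)) (hK : IsCompact K) (z ξ : Amb n) :
    BddAbove ((fun y => ⟪ξ - cos θ • eVec n, y - z⟫) '' K) :=
  (hK.image (by fun_prop)).bddAbove

lemma le_supp (n : ℕ) (θ : ℝ) (K : Set (Amb n)) (hK : IsCompact K) (z ξ y : Amb n) (hy : y ∈ K) :
    ⟪ξ - cos θ • eVec n, y - z⟫ ≤ suppFn n θ K z ξ :=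
  le_csSup (supp_bdd n θ K hK z ξ) ⟨y, hy, rfl⟩

lemma supp_sub (n : ℕ) (θ : ℝ) (K : Set (Amb n)) (hK : IsCompact K) (hne : K.Nonempty)
    (z z' ξ : Amb n) :
    suppFn n θ K z ξ = suppFn n θ K z' ξ + ⟪ξ - cos θ • eVec n, z' - z⟫ := by
  have key : ∀ z z' : Amb n,
      suppFn n θ K z ξ ≤ suppFn n θ K z' ξ + ⟪ξ - cos θ • eVec n, z' - z⟫ := by
    intro z z'
    apply csSup_le (hne.image _)
    rintro _ ⟨y, hy, rfl⟩
    have h1 := le_supp n θ K hK z' ξ y hy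
    have h2 : y - z = (y - z') + (z' - z) := by abel
    show ⟪ξ - cos θ • eVec n, y - z⟫ ≤ _
    rw [h2, inner_add_right]
    linarith
  have h1 := key z z'
  have h2 := key z' z
  have h3 : z - z' = -(z' - z) := by abel
  rw [h3, inner_neg_right] at h2
  linarith

lemma supp_cont (n : ℕ) (θ : ℝ) (K : Set (Amb n)) (hK : IsCompact K) (z : Amb n) :
    Continuous (suppFn n θ K z) := by
  unfold suppFn
  refine hK.continuous_sSup (f := fun ξ y => ⟪ξ - cos θ • eVec n, y - z⟫) ?_
  show Continuous (fun p : Amb n × Amb n => ⟪p.1 - cos θ • eVec n, p.2 - z⟫)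
  fun_prop

lemma capSupp_meas (n : ℕ) (θ : ℝ) (K : Set (Amb n)) (hK : IsCompact K) (z : Amb n) :
    Measurable (capSupp n θ K z) :=
  (supp_cont n θ K hK z).measurable.div (ell_cont n θ).measurable

/-- The upper bound for the capillary support function. -/
lemma capSupp_le (n : ℕ) (θ : ℝ) (hθ : θ ∈ Set.Ioo 0 (π / 2)) (K : Set (Amb n))
    (hK : IsCompact K) (z ξ : Amb n) (hz : z ∈ K) (hξ : ξ ∈ capSphere n θ) :
    0 ≤ capSupp n θ K z ξ ∧ capSupp n θ K z ξ ≤ Metric.diam K / (1 - cos θ) := by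
  have hb := ell_bounds n θ hθ hξ
  have hp := one_sub_cos_pos θ hθ
  have h0 : 0 ≤ suppFn n θ K z ξ := by
    have := le_supp n θ K hK z ξ z hz
    simpa using this
  have h1 : suppFn n θ K z ξ ≤ Metric.diam K := by
    apply csSup_le (Set.Nonempty.image _ ⟨z, hz⟩)
    rintro _ ⟨y, hy, rfl⟩
    refine (real_inner_le_norm _ _).trans ?_
    rw [nu_norm n θ hξ, one_mul, ← dist_eq_norm]
    exact Metric.dist_le_diam_of_mem hK.isBounded hy hz
  unfold capSupp
  refine ⟨div_nonneg h0 (by linarith), ?_⟩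
  apply div_le_div₀ (h0.trans h1) h1 hp hb.1

lemma le_capSupp (n : ℕ) (θ : ℝ) (hθ : θ ∈ Set.Ioo 0 (π / 2)) (K : Set (Amb n))
    (hK : IsCompact K) (z ξ a : Amb n) (ha : a (Fin.last n) = 0) (ε : ℝ)
    (hz1 : z + ε • a ∈ K) (hz2 : z - ε • a ∈ K) (hε : 0 < ε) (hξ : ξ ∈ capSphere n θ) :
    ε * |⟪ξ, a⟫| ≤ capSupp n θ K z ξ := by
  have hb := ell_bounds n θ hθ hξ
  have hp := one_sub_cos_pos θ hθ
  have h1 := le_supp n θ K hK z ξ _ hz1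
  have h2 := le_supp n θ K hK z ξ _ hz2
  rw [add_sub_cancel_left, inner_smul_right, nu_inner n θ ξ a ha] at h1
  rw [sub_sub_cancel_left, inner_neg_right, inner_smul_right, nu_inner n θ ξ a ha] at h2
  have h3 : ε * |⟪ξ, a⟫| ≤ suppFn n θ K z ξ := by
    rw [show ε * |⟪ξ, a⟫| = |ε * ⟪ξ, a⟫| by rw [abs_mul, abs_of_pos hε]]
    exact abs_le'.2 ⟨h1, h2⟩
  refine h3.trans ?_
  unfold capSupp
  rw [le_div_iff₀ (by linarith)]
  have h4 : 0 ≤ suppFn n θ K z ξ := le_trans (by positivity) h3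
  exact mul_le_of_le_one_right h4 hb.2

lemma log_capSupp_int (n : ℕ) (θ : ℝ) (hθ : θ ∈ Set.Ioo 0 (π / 2)) (K : Set (Amb n))
    (hK : IsCompact K) (z a : Amb n) (ha : a (Fin.last n) = 0) (ε : ℝ) (hz : z ∈ K)
    (hz1 : z + ε • a ∈ K) (hz2 : z - ε • a ∈ K) (hε : 0 < ε)
    (hne : ∀ᵐ ξ ∂(μH[(n:ℝ)] : Measure (Amb n)).restrict (capSphere n θ), ⟪ξ, a⟫ ≠ 0)
    (hlogint : IntegrableOn (fun ξ => Real.log ⟪ξ, a⟫) (capSphere n θ) (μH[(n:ℝ)])) :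
    IntegrableOn (fun ξ => Real.log (capSupp n θ K z ξ) * ell n θ ξ) (capSphere n θ)
      (μH[(n:ℝ)]) := by
  have hcm := (cap_closed n θ).measurableSet
  have hp := one_sub_cos_pos θ hθ
  have : IsFiniteMeasure ((μH[(n:ℝ)] : Measure (Amb n)).restrict (capSphere n θ)) :=
    ⟨by rw [Measure.restrict_apply MeasurableSet.univ, univ_inter]; exact cap_finite n θ hθ⟩
  set B := Metric.diam K / (1 - cos θ) with hB
  have hB0 : 0 ≤ B := div_nonneg Metric.diam_nonneg hp.le
  have hdom : Integrable (fun ξ => |Real.log ε| + |Real.log ⟪ξ, a⟫| + B)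
      ((μH[(n:ℝ)] : Measure (Amb n)).restrict (capSphere n θ)) :=
    ((integrable_const _).add (Integrable.abs hlogint)).add (integrable_const _)
  refine Integrable.mono' hdom (((capSupp_meas n θ K hK z).log.mul
    (ell_cont n θ).measurable).aestronglyMeasurable) ?_
  filter_upwards [hne, ae_restrict_mem hcm] with ξ h0 hξ
  have hb := ell_bounds n θ hθ hξ
  have hl : ‖ell n θ ξ‖ ≤ 1 := by rw [Real.norm_eq_abs, abs_le]; constructor <;> linarith
  rw [norm_mul]
  refine (mul_le_of_le_one_right (norm_nonneg _) hl).trans ?_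
  have h1 := (capSupp_le n θ hθ K hK z ξ hz hξ).2
  have h2 := le_capSupp n θ hθ K hK z ξ a ha ε hz1 hz2 hε hξ
  have h3 : 0 < ε * |⟪ξ, a⟫| := mul_pos hε (abs_pos.2 h0)
  have h4 := Real.log_le_log h3 h2
  rw [Real.log_mul hε.ne' (abs_ne_zero.2 h0), Real.log_abs] at h4
  have h5 := Real.log_le_self (h3.le.trans h2)
  rw [Real.norm_eq_abs, abs_le]
  constructor
  · linarith [neg_abs_le (Real.log ε), neg_abs_le (Real.log ⟪ξ, a⟫)]
  · linarith [abs_nonneg (Real.log ε), abs_nonneg (Real.log ⟪ξ, a⟫)]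

lemma omega_pos (n : ℕ) (θ : ℝ) (hθ : θ ∈ Set.Ioo 0 (π / 2)) :
    IntegrableOn (ell n θ) (capSphere n θ) (μH[(n:ℝ)]) ∧ 0 < omegaTheta n θ := by
  have hcm := (cap_closed n θ).measurableSet
  have hp := one_sub_cos_pos θ hθ
  have hfin := cap_finite n θ hθ
  have : IsFiniteMeasure ((μH[(n:ℝ)] : Measure (Amb n)).restrict (capSphere n θ)) :=
    ⟨by rw [Measure.restrict_apply MeasurableSet.univ, univ_inter]; exact hfin⟩
  have hi : IntegrableOn (ell n θ) (capSphere n θ) (μH[(n:ℝ)]) := by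
    refine Integrable.mono' (integrable_const (1:ℝ)) (ell_cont n θ).aestronglyMeasurable ?_
    filter_upwards [ae_restrict_mem hcm] with ξ hξ
    have hb := ell_bounds n θ hθ hξ
    rw [Real.norm_eq_abs, abs_le]; constructor <;> linarith
  refine ⟨hi, ?_⟩
  have h1 : ∫ ξ in capSphere n θ, (1 - cos θ) ∂(μH[(n:ℝ)] : Measure (Amb n)) ≤ omegaTheta n θ := by
    apply setIntegral_mono_on (integrable_const _) hi hcm
    intro ξ hξ
    exact (ell_bounds n θ hθ hξ).1
  refine lt_of_lt_of_le ?_ h1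
  rw [setIntegral_const, smul_eq_mul]
  exact mul_pos (ENNReal.toReal_pos (cap_pos n θ hθ).ne' hfin.ne) hp

lemma entropy_bdd (n : ℕ) (θ : ℝ) (hθ : θ ∈ Set.Ioo 0 (π / 2)) (K S : Set (Amb n))
    (hK : IsCompact K) (hS : S ⊆ K) : BddAbove (entropyAt n θ K '' S) := by
  have hcm := (cap_closed n θ).measurableSet
  have hp := one_sub_cos_pos θ hθ
  have : IsFiniteMeasure ((μH[(n:ℝ)] : Measure (Amb n)).restrict (capSphere n θ)) :=
    ⟨by rw [Measure.restrict_apply MeasurableSet.univ, univ_inter]; exact cap_finite n θ hθ⟩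
  obtain ⟨hi, hω⟩ := omega_pos n θ hθ
  set B := Metric.diam K / (1 - cos θ) with hB
  have hB0 : 0 ≤ B := div_nonneg Metric.diam_nonneg hp.le
  refine ⟨(1 / omegaTheta n θ) * ∫ ξ in capSphere n θ, B ∂(μH[(n:ℝ)] : Measure (Amb n)), ?_⟩
  rintro _ ⟨z, hz, rfl⟩
  unfold entropyAt
  apply mul_le_mul_of_nonneg_left _ (by positivity)
  by_cases hlogint : IntegrableOn (fun ξ => Real.log (capSupp n θ K z ξ) * ell n θ ξ) (capSphere n θ)
      (μH[(n:ℝ)])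
  · apply setIntegral_mono_on hlogint (integrable_const _) hcm
    intro ξ hξ
    have hb := ell_bounds n θ hθ hξ
    have h1 := capSupp_le n θ hθ K hK z ξ (hS hz) hξ
    have h2 := Real.log_le_self h1.1
    calc Real.log (capSupp n θ K z ξ) * ell n θ ξ ≤ B * ell n θ ξ := by
          apply mul_le_mul_of_nonneg_right _ (by linarith)
          linarith [h1.2]
      _ ≤ B := mul_le_of_le_one_right hB0 hb.2
  · rw [integral_undef hlogint]
    exact integral_nonneg fun _ => hB0

lemma log_mid {x y : ℝ} (hx : 0 < x) (hy : 0 < y) :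
    (Real.log x + Real.log y) / 2 + (1 / 8) * ((x - y) / ((x + y) / 2)) ^ 2 ≤
      Real.log ((x + y) / 2) := by
  have h1 := Real.one_sub_inv_le_log_of_pos (x := ((x + y) / 2) ^ 2 / (x * y)) (by positivity)
  rw [Real.log_div (by positivity) (by positivity), Real.log_mul hx.ne' hy.ne', Real.log_pow] at h1
  have h2 : 1 - (((x + y) / 2) ^ 2 / (x * y))⁻¹ = (1 / 4) * ((x - y) / ((x + y) / 2)) ^ 2 := by
    field_simp; ring
  rw [h2] at h1
  push_cast at h1
  linarith

lemma jensen_pt {G : ℝ} (hG : 0 < G) (M : ℝ) :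
    Real.exp M * (1 + Real.log G - M) ≤ G := by
  have h1 := Real.add_one_le_exp (Real.log G - M)
  have h2 : Real.exp M * Real.exp (Real.log G - M) = G := by
    rw [← Real.exp_add, add_sub_cancel, Real.exp_log hG]
  calc _ ≤ Real.exp M * Real.exp (Real.log G - M) := by gcongr; linarith
    _ = G := h2

lemma relint_spec (n : ℕ) (S : Set (Amb n)) (x : Amb n) :
    x ∈ intrinsicInterior ℝ S ↔ x ∈ affineSpan ℝ S ∧
      ∃ δ > 0, ∀ y ∈ affineSpan ℝ S, dist y x < δ → y ∈ S := by
  rw [mem_intrinsicInterior]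
  constructor
  · rintro ⟨y, hy, rfl⟩
    refine ⟨y.2, ?_⟩
    rw [mem_interior_iff_mem_nhds, Metric.mem_nhds_iff] at hy
    obtain ⟨δ, hδ, h⟩ := hy
    exact ⟨δ, hδ, fun w hw hd => h (show (⟨w, hw⟩ : affineSpan ℝ S) ∈ Metric.ball y δ from hd)⟩
  · rintro ⟨hx, δ, hδ, h⟩
    refine ⟨⟨x, hx⟩, ?_, rfl⟩
    rw [mem_interior_iff_mem_nhds, Metric.mem_nhds_iff]
    exact ⟨δ, hδ, fun w hw => h w w.2 hw⟩

lemma span_move (n : ℕ) (S : Set (Amb n)) {p q r : Amb n} (t : ℝ) (hp : p ∈ affineSpan ℝ S)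
    (hq : q ∈ affineSpan ℝ S) (hr : r ∈ affineSpan ℝ S) : r + t • (p - q) ∈ affineSpan ℝ S := by
  have h1 : t • (p - q) ∈ (affineSpan ℝ S).direction :=
    Submodule.smul_mem _ _ (AffineSubspace.vsub_mem_direction hp hq)
  have := AffineSubspace.vadd_mem_of_mem_direction h1 hr
  rwa [vadd_eq_add, add_comm (t • (p - q)) r] at this

lemma relint_mid (n : ℕ) (S : Set (Amb n)) (hS : Convex ℝ S) {p q : Amb n}
    (hp : p ∈ intrinsicInterior ℝ S) (hq : q ∈ intrinsicInterior ℝ S) :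
    (1/2 : ℝ) • (p + q) ∈ intrinsicInterior ℝ S := by
  rw [relint_spec] at hp hq ⊢
  obtain ⟨hp0, δ, hδ, hp1⟩ := hp
  obtain ⟨hq0, δ', hδ', hq1⟩ := hq
  have hm : (1/2 : ℝ) • (p + q) = q + (1/2 : ℝ) • (p - q) := by module
  refine ⟨by rw [hm]; exact span_move n S _ hp0 hq0 hq0, min δ δ', lt_min hδ hδ', ?_⟩
  intro y hy hd
  have h1 : y + (1/2 : ℝ) • (p - q) ∈ S := by
    refine hp1 _ (span_move n S _ hp0 hq0 hy) ?_
    refine lt_of_eq_of_lt ?_ (lt_of_lt_of_le hd (min_le_left _ _))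
    rw [dist_eq_norm, dist_eq_norm]; congr 1; module
  have h2 : y + (1/2 : ℝ) • (q - p) ∈ S := by
    refine hq1 _ (span_move n S _ hq0 hp0 hy) ?_
    refine lt_of_eq_of_lt ?_ (lt_of_lt_of_le hd (min_le_right _ _))
    rw [dist_eq_norm, dist_eq_norm]; congr 1; module
  have h3 := hS h1 h2 (by norm_num : (0:ℝ) ≤ 1/2) (by norm_num : (0:ℝ) ≤ 1/2) (by norm_num)
  convert h3 using 1
  module

lemma relint_eps (n : ℕ) (S : Set (Amb n)) {p q x : Amb n}
    (hp : p ∈ affineSpan ℝ S) (hq : q ∈ affineSpan ℝ S) (hx : x ∈ intrinsicInterior ℝ S)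
    (c : ℝ) (hc : ‖c • (p - q)‖ = 1) :
    ∃ ε : ℝ, ε > 0 ∧ x + ε • (c • (p - q)) ∈ S ∧ x - ε • (c • (p - q)) ∈ S := by
  rw [relint_spec] at hx
  obtain ⟨hx0, δ, hδ, hx1⟩ := hx
  refine ⟨δ / 2, by positivity, hx1 _ ?_ ?_, hx1 _ ?_ ?_⟩
  · rw [smul_smul]; exact span_move n S _ hp hq hx0
  · rw [dist_eq_norm, add_sub_cancel_left, norm_smul, hc, Real.norm_eq_abs, abs_of_pos (by positivity)]
    linarith
  · rw [smul_smul, sub_eq_add_neg, ← neg_smul]; exact span_move n S _ hp hq hx0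
  · rw [dist_eq_norm, sub_sub_cancel_left, norm_neg, norm_smul, hc, Real.norm_eq_abs,
      abs_of_pos (by positivity)]
    linarith

/-- there is `D > 0` depending only on `n` and `θ` such that for every
`θ`-capillary convex body with capillary entropy point `z_e` and every `z` in the relative
interior of `K_f`, `ℰ_θ(K, z) ≤ ℰ_θ(K) - D e^{-2 ℰ_θ(K)} |z - z_e|²`. -/
theorem stmt_14 (n : ℕ) (hn : 1 ≤ n) (θ : ℝ) (hθ : θ ∈ Set.Ioo 0 (π / 2)) :
    ∃ D : ℝ, 0 < D ∧
      ∀ K : Set (Amb n), IsThetaCapillary n θ K →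
        ∀ ze ∈ intrinsicInterior ℝ (K ∩ hyperplane n),
          entropyAt n θ K ze = capEntropy n θ K →
          ∀ z ∈ intrinsicInterior ℝ (K ∩ hyperplane n),
            entropyAt n θ K z ≤
              capEntropy n θ K -
                D * Real.exp (-2 * capEntropy n θ K) * ‖z - ze‖ ^ 2 := by
  obtain ⟨C, hC⟩ := log_cap n hn θ hθ
  obtain ⟨hell, hω⟩ := omega_pos n θ hθ
  set ω := omegaTheta n θ with hωd
  refine ⟨(1 / 4) * Real.exp (-(2 * C / ω)), by positivity, ?_⟩
  intro K hKK ze hze hE z hz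
  have hK := hKK.1.compact
  set S := K ∩ hyperplane n with hS
  have hSc : Convex ℝ S := by
    refine hKK.1.convex.inter ?_
    have : hyperplane n = (fun x : Amb n => x (Fin.last n)) ⁻¹' {0} := rfl
    rw [this]
    exact (convex_singleton (0:ℝ)).is_linear_preimage ⟨by simp, by simp⟩
  have hSub : intrinsicInterior ℝ S ⊆ K :=
    intrinsicInterior_subset.trans inter_subset_left
  by_cases hzz : z = ze
  · subst hzz
    rw [hE]; simp
  have hw : 0 < ‖z - ze‖ := norm_pos_iff.2 (sub_ne_zero.2 hzz)
  set w := ‖z - ze‖ with hwd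
  set a : Amb n := w⁻¹ • (z - ze) with had
  have hna : ‖a‖ = 1 := by
    rw [had, norm_smul, Real.norm_eq_abs, abs_of_pos (by positivity), ← hwd]
    field_simp
  have hza : z - ze = w • a := by
    rw [had, smul_smul, mul_inv_cancel₀ hw.ne', one_smul]
  have hz0 : z (Fin.last n) = 0 := (intrinsicInterior_subset hz).2
  have hze0 : ze (Fin.last n) = 0 := (intrinsicInterior_subset hze).2
  have ha : a (Fin.last n) = 0 := by simp [had, hz0, hze0]
  obtain ⟨hne, hlogint, hlogint2, hP⟩ := hC a ha hna
  set m : Amb n := (1/2 : ℝ) • (z + ze) with hmd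
  have hm : m ∈ intrinsicInterior ℝ S := relint_mid n S hSc hz hze
  have hzs := ((relint_spec n S z).1 hz).1
  have hzes := ((relint_spec n S ze).1 hze).1
  have hI : ∀ x ∈ intrinsicInterior ℝ S,
      IntegrableOn (fun ξ => Real.log (capSupp n θ K x ξ) * ell n θ ξ) (capSphere n θ)
        (μH[(n:ℝ)]) ∧ ∀ ξ ∈ capSphere n θ, ⟪ξ, a⟫ ≠ 0 → 0 < capSupp n θ K x ξ := by
    intro x hx
    obtain ⟨ε, hε, h1, h2⟩ := relint_eps n S hzs hzes hx w⁻¹ hna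
    refine ⟨log_capSupp_int n θ hθ K hK x a ha ε (hSub hx) h1.1 h2.1 hε hne hlogint, ?_⟩
    intro ξ hξ h0
    refine lt_of_lt_of_le ?_ (le_capSupp n θ hθ K hK x ξ a ha ε h1.1 h2.1 hε hξ)
    exact mul_pos hε (abs_pos.2 h0)
  obtain ⟨hIz, hpz⟩ := hI z hz
  obtain ⟨hIe, hpe⟩ := hI ze hze
  obtain ⟨hIm, hpm⟩ := hI m hm
  have hEm : entropyAt n θ K m ≤ capEntropy n θ K :=
    le_csSup (entropy_bdd n θ hθ K _ hK hSub) ⟨m, hm, rfl⟩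
  set P := ∫ ξ in capSphere n θ, Real.log ⟪ξ, a⟫ * ell n θ ξ ∂μH[(n:ℝ)] with hPd
  have hEz : entropyAt n θ K z = (1 / ω) *
    ∫ ξ in capSphere n θ, Real.log (capSupp n θ K z ξ) * ell n θ ξ ∂μH[(n : ℝ)] := rfl
  have hEe : entropyAt n θ K ze = (1 / ω) *
    ∫ ξ in capSphere n θ, Real.log (capSupp n θ K ze ξ) * ell n θ ξ ∂μH[(n : ℝ)] := rfl
  have hEmm : entropyAt n θ K m = (1 / ω) *
    ∫ ξ in capSphere n θ, Real.log (capSupp n θ K m ξ) * ell n θ ξ ∂μH[(n : ℝ)] := rfl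
  set Iz := ∫ ξ in capSphere n θ, Real.log (capSupp n θ K z ξ) * ell n θ ξ ∂μH[(n : ℝ)]
  set Ie := ∫ ξ in capSphere n θ, Real.log (capSupp n θ K ze ξ) * ell n θ ξ ∂μH[(n : ℝ)]
  set Im := ∫ ξ in capSphere n θ, Real.log (capSupp n θ K m ξ) * ell n θ ξ ∂μH[(n : ℝ)]
  set M := 2 * Real.log w + (2 * P - 2 * Im) / ω with hM
  set A := (1 / 8) * Real.exp M with hA
  -- the pointwise inequality
  have hpt : ∀ᵐ ξ ∂(μH[(n:ℝ)] : Measure (Amb n)).restrict (capSphere n θ),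
      (1/2) * (Real.log (capSupp n θ K z ξ) * ell n θ ξ) +
        (1/2) * (Real.log (capSupp n θ K ze ξ) * ell n θ ξ) +
        (A * (1 + 2 * Real.log w - M) * ell n θ ξ +
          (2 * A) * (Real.log ⟪ξ, a⟫ * ell n θ ξ) -
          (2 * A) * (Real.log (capSupp n θ K m ξ) * ell n θ ξ))
        ≤ Real.log (capSupp n θ K m ξ) * ell n θ ξ := by
    filter_upwards [hne, ae_restrict_mem (cap_closed n θ).measurableSet] with ξ h0 hξ
    have hb := ell_bounds n θ hθ hξ
    have hp := one_sub_cos_pos θ hθ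
    have hl : 0 < ell n θ ξ := by linarith
    have hx := hpz ξ hξ h0
    have hy := hpe ξ hξ h0
    have hu := hpm ξ hξ h0
    have hKne : K.Nonempty := ⟨z, hSub hz⟩
    have e1 := supp_sub n θ K hK hKne z ze ξ
    have e2 := supp_sub n θ K hK hKne m ze ξ
    have e3 : ⟪ξ - cos θ • eVec n, ze - z⟫ = -(w * ⟪ξ, a⟫) := by
      rw [← neg_sub z ze, hza, inner_neg_right, inner_smul_right, nu_inner n θ ξ a ha]
    have e4 : ⟪ξ - cos θ • eVec n, ze - m⟫ = -(w * ⟪ξ, a⟫) / 2 := by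
      have : ze - m = (1/2 : ℝ) • (ze - z) := by rw [hmd]; module
      rw [this, inner_smul_right, e3]; ring
    rw [e3] at e1
    rw [e4] at e2
    have hmid : capSupp n θ K m ξ = (capSupp n θ K z ξ + capSupp n θ K ze ξ) / 2 := by
      unfold capSupp
      rw [e1, e2]; ring
    have hdiff : (w * ⟪ξ, a⟫) ^ 2 ≤ (capSupp n θ K z ξ - capSupp n θ K ze ξ) ^ 2 := by
      have : capSupp n θ K z ξ - capSupp n θ K ze ξ = -(w * ⟪ξ, a⟫) / ell n θ ξ := by
        unfold capSupp
        rw [e1]; ring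
      rw [this, div_pow, neg_sq, le_div_iff₀ (by positivity)]
      apply mul_le_of_le_one_right (sq_nonneg _)
      nlinarith
    have h1 := log_mid hx hy
    rw [← hmid] at h1
    have hG : 0 < (w * ⟪ξ, a⟫ / capSupp n θ K m ξ) ^ 2 := by positivity
    have h2 := jensen_pt hG M
    rw [Real.log_pow, Real.log_div (by positivity) hu.ne', Real.log_mul hw.ne' h0] at h2
    have h3 : (w * ⟪ξ, a⟫ / capSupp n θ K m ξ) ^ 2 ≤
        ((capSupp n θ K z ξ - capSupp n θ K ze ξ) / capSupp n θ K m ξ) ^ 2 := by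
      rw [div_pow, div_pow]; gcongr
    push_cast at h2
    have h4 : (Real.log (capSupp n θ K z ξ) + Real.log (capSupp n θ K ze ξ)) / 2 +
        A * (1 + 2 * (Real.log w + Real.log ⟪ξ, a⟫ - Real.log (capSupp n θ K m ξ)) - M) ≤
        Real.log (capSupp n θ K m ξ) := by
      rw [hA]; linarith
    have h5 := mul_le_mul_of_nonneg_right h4 hl.le
    refine le_trans (le_of_eq ?_) h5
    ring
  have i1 := (hIz.const_mul (1/2)).add (hIe.const_mul (1/2))
  have i2 := (Integrable.const_mul hell (A * (1 + 2 * Real.log w - M))).add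
    (Integrable.const_mul hlogint2 (2 * A))
  have i3 := i2.sub (hIm.const_mul (2 * A))
  have hmain := integral_mono_ae (i1.add i3) hIm hpt
  have hcalc : (1/2) * Iz + (1/2) * Ie +
      (A * (1 + 2 * Real.log w - M) * ω + (2 * A) * P - (2 * A) * Im) ≤ Im := by
    refine le_trans (le_of_eq ?_) hmain
    rw [integral_add' i1 i3, integral_add' (hIz.const_mul (1/2)) (hIe.const_mul (1/2)),
      integral_sub' i2 (hIm.const_mul (2 * A)),
      integral_add' (Integrable.const_mul hell _) (Integrable.const_mul hlogint2 (2 * A))]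
    simp only [integral_const_mul]
    rfl
  have hcalc2 : (1/2) * Iz + (1/2) * Ie + A * ω ≤ Im := by
    refine le_trans (le_of_eq ?_) hcalc
    rw [hM]; field_simp; ring
  have hcalc3 : (1/2) * entropyAt n θ K z + (1/2) * entropyAt n θ K ze + A ≤ entropyAt n θ K m := by
    rw [hEz, hEe, hEmm]
    have := mul_le_mul_of_nonneg_left hcalc2 (by positivity : 0 ≤ 1 / ω)
    refine le_trans (le_of_eq ?_) this
    field_simp
  have hexp : Real.exp (-(2 * C / ω)) * Real.exp (-2 * capEntropy n θ K) * w ^ 2 ≤ Real.exp M := by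
    have hw2 : w ^ 2 = Real.exp (2 * Real.log w) := by
      rw [two_mul, Real.exp_add, Real.exp_log hw]; ring
    rw [hw2, ← Real.exp_add, ← Real.exp_add]
    apply Real.exp_le_exp.2
    rw [hM]
    have h1 : -(2 * C / ω) ≤ 2 * P / ω := by
      rw [← neg_div]; gcongr; linarith
    have h2 : (2 * P - 2 * Im) / ω = 2 * P / ω - 2 * entropyAt n θ K m := by
      rw [hEmm]; field_simp
    rw [h2]
    linarith
  rw [hE] at hcalc3
  rw [hA] at hcalc3
  nlinarith

end
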